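/- Let K > 0, T > 0, and let f : (0, T) → ℝ be continuously differentiable with f'(ρ) ≤ −4·f(ρ)^2 − K/4 for all ρ ∈ (0, T), and suppose limsup_{ρ→0⁺} ( f(ρ) − 1/(4ρ) ) ≤ 0. Then f(ρ) ≤ (√K/4)·cot(√K·ρ) for all ρ ∈ (0, min(T, π/√K)). -/

import Mathlib

/-!
For a solution of `u' ≤ -(u² + ω²)` the function `x ↦ arctan (u x / ω) + ω x` is antitone. Since
`arctan < π / 2`, comparing its value at `x` with its values near the left endpoint `a` gives
`arctan (u x / ω) ≤ π / 2 - ω (x - a)`, and applying `tan` yields `u x ≤ ω cot (ω (x - a))`. The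
lower bound `-π / 2 < arctan` shows at the same time that `u` cannot live beyond `a + π / ω`.
-/

open Set Filter Topology

theorem antitoneOn_arctan_div_add_mul_of_riccati {D : Set ℝ} (hD : Convex ℝ D) {u u' : ℝ → ℝ}
    {ω : ℝ} (hω : 0 < ω) (hu : ContinuousOn u D)
    (hu' : ∀ x ∈ interior D, HasDerivWithinAt u (u' x) (interior D) x)
    (hriccati : ∀ x ∈ interior D, u' x ≤ -(u x ^ 2 + ω ^ 2)) :
    AntitoneOn (fun x ↦ Real.arctan (u x / ω) + ω * x) D := by
  refine antitoneOn_of_hasDerivWithinAt_nonpos hD (by fun_prop)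
    (fun x hx ↦ ((hu' x hx).div_const ω).arctan.add ((hasDerivWithinAt_id x _).const_mul ω))
    fun x hx ↦ ?_
  calc 1 / (1 + (u x / ω) ^ 2) * (u' x / ω) + ω * 1
      = ω * (u' x + (u x ^ 2 + ω ^ 2)) / (u x ^ 2 + ω ^ 2) := by
        have : u x ^ 2 + ω ^ 2 ≠ 0 := by positivity
        have : 1 + (u x / ω) ^ 2 = (u x ^ 2 + ω ^ 2) / ω ^ 2 := by field_simp; ring
        rw [this]
        field_simp
    _ ≤ 0 := by
        refine div_nonpos_of_nonpos_of_nonneg ?_ (by positivity)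
        exact mul_nonpos_of_nonneg_of_nonpos hω.le (by linarith [hriccati x hx])

theorem le_of_antitoneOn_Ioo_of_le_of_tendsto {α β : Type*} [LinearOrder α] [TopologicalSpace α]
    [OrderTopology α] [DenselyOrdered α] [Preorder β] [TopologicalSpace β] [OrderClosedTopology β]
    {g h : α → β} {a b x : α} {l : β} (hg : AntitoneOn g (Ioo a b))
    (hgh : ∀ y ∈ Ioo a b, g y ≤ h y) (hh : Tendsto h (𝓝[>] a) (𝓝 l)) (hx : x ∈ Ioo a b) :
    g x ≤ l := by
  have : (𝓝[>] a).NeBot := nhdsGT_neBot_of_exists_gt ⟨x, hx.1⟩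
  refine ge_of_tendsto hh ?_
  filter_upwards [Ioo_mem_nhdsGT hx.1] with y hy
  have hyb : y ∈ Ioo a b := ⟨hy.1, hy.2.trans hx.2⟩
  exact (hg hyb hx hy.2.le).trans (hgh y hyb)

theorem le_cot_of_arctan_le_pi_div_two_sub {t θ : ℝ} (hθ : 0 < θ)
    (h : Real.arctan t ≤ Real.pi / 2 - θ) : t ≤ Real.cot θ := by
  have hθ' : Real.pi / 2 - θ ∈ Ioo (-(Real.pi / 2)) (Real.pi / 2) :=
    ⟨(Real.neg_pi_div_two_lt_arctan t).trans_le h, sub_lt_self _ hθ⟩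
  calc t = Real.tan (Real.arctan t) := (Real.tan_arctan t).symm
    _ ≤ Real.tan (Real.pi / 2 - θ) :=
      Real.strictMonoOn_tan.monotoneOn (Real.arctan_mem_Ioo t) hθ' h
    _ = Real.cot θ := by rw [Real.tan_pi_div_two_sub, Real.tan_inv_eq_cot]

section Riccati

variable {u u' : ℝ → ℝ} {ω a b x : ℝ}

theorem arctan_div_le_of_riccati (hω : 0 < ω) (hu : ∀ y ∈ Ioo a b, HasDerivAt u (u' y) y)
    (hriccati : ∀ y ∈ Ioo a b, u' y ≤ -(u y ^ 2 + ω ^ 2)) (hx : x ∈ Ioo a b) :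
    Real.arctan (u x / ω) ≤ Real.pi / 2 - ω * (x - a) := by
  have hanti : AntitoneOn (fun y ↦ Real.arctan (u y / ω) + ω * y) (Ioo a b) := by
    refine antitoneOn_arctan_div_add_mul_of_riccati (u' := u') (convex_Ioo a b) hω
      (HasDerivAt.continuousOn hu) ?_ ?_ <;> rw [interior_Ioo]
    exacts [fun y hy ↦ (hu y hy).hasDerivWithinAt, hriccati]
  have htendsto : Tendsto (fun y ↦ Real.pi / 2 + ω * y) (𝓝[>] a) (𝓝 (Real.pi / 2 + ω * a)) :=
    Continuous.continuousWithinAt (by fun_prop)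
  have hle (y : ℝ) (_ : y ∈ Ioo a b) :
      Real.arctan (u y / ω) + ω * y ≤ Real.pi / 2 + ω * y := by
    gcongr
    exact (Real.arctan_lt_pi_div_two _).le
  linarith [le_of_antitoneOn_Ioo_of_le_of_tendsto hanti hle htendsto hx]

theorem sub_lt_pi_div_of_riccati (hω : 0 < ω) (hu : ∀ y ∈ Ioo a b, HasDerivAt u (u' y) y)
    (hriccati : ∀ y ∈ Ioo a b, u' y ≤ -(u y ^ 2 + ω ^ 2)) (hx : x ∈ Ioo a b) :
    x - a < Real.pi / ω := by
  rw [lt_div_iff₀' hω]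
  linarith [arctan_div_le_of_riccati hω hu hriccati hx, Real.neg_pi_div_two_lt_arctan (u x / ω)]

theorem le_mul_cot_of_riccati (hω : 0 < ω) (hu : ∀ y ∈ Ioo a b, HasDerivAt u (u' y) y)
    (hriccati : ∀ y ∈ Ioo a b, u' y ≤ -(u y ^ 2 + ω ^ 2)) (hx : x ∈ Ioo a b) :
    u x ≤ ω * Real.cot (ω * (x - a)) := by
  rw [← div_le_iff₀' hω]
  exact le_cot_of_arctan_le_pi_div_two_sub (mul_pos hω (sub_pos.2 hx.1))
    (arctan_div_le_of_riccati hω hu hriccati hx)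

end Riccati

theorem riccati_comparison_cot_general {K T : ℝ} (hK : 0 < K) {f f' : ℝ → ℝ}
    (hf : ∀ ρ ∈ Ioo 0 T, HasDerivAt f (f' ρ) ρ)
    (hineq : ∀ ρ ∈ Ioo 0 T, f' ρ ≤ -4 * f ρ ^ 2 - K / 4) {ρ : ℝ} (hρ : ρ ∈ Ioo 0 T) :
    ρ < Real.pi / √K ∧ f ρ ≤ √K / 4 * Real.cot (√K * ρ) := by
  have hω : 0 < √K := Real.sqrt_pos.2 hK
  have hderiv (x : ℝ) (hx : x ∈ Ioo 0 T) : HasDerivAt (fun y ↦ 4 * f y) (4 * f' x) x :=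
    (hf x hx).const_mul 4
  have hriccati (x : ℝ) (hx : x ∈ Ioo 0 T) : 4 * f' x ≤ -((4 * f x) ^ 2 + √K ^ 2) := by
    rw [Real.sq_sqrt hK.le]
    linarith [hineq x hx]
  have hlt := sub_lt_pi_div_of_riccati hω hderiv hriccati hρ
  have hcot := le_mul_cot_of_riccati hω hderiv hriccati hρ
  rw [sub_zero] at hlt hcot
  exact ⟨hlt, by linarith⟩

/-- Riccati comparison with the cotangent model: if `f' ≤ -4 f² - K/4` on `(0, T)` and
`limsup_{ρ→0⁺} (f ρ - 1/(4ρ)) ≤ 0`, then `f ρ ≤ (√K/4)·cot(√K·ρ)` on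
`(0, min T (π/√K))`. -/
theorem riccati_comparison_cot (K T : ℝ) (hK : 0 < K) (hT : 0 < T)
    (f f' : ℝ → ℝ)
    (hf : ∀ ρ ∈ Set.Ioo 0 T, HasDerivAt f (f' ρ) ρ)
    (hf' : ContinuousOn f' (Set.Ioo 0 T))
    (hineq : ∀ ρ ∈ Set.Ioo 0 T, f' ρ ≤ -4 * (f ρ) ^ 2 - K / 4)
    (hlim : Filter.limsup (fun ρ => f ρ - 1 / (4 * ρ)) (nhdsWithin 0 (Set.Ioi 0)) ≤ 0) :
    ∀ ρ ∈ Set.Ioo 0 (min T (Real.pi / Real.sqrt K)),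
      f ρ ≤ Real.sqrt K / 4 *
        (Real.cos (Real.sqrt K * ρ) / Real.sin (Real.sqrt K * ρ)) := by
  intro ρ hρ
  rw [← Real.cot_eq_cos_div_sin]
  exact (riccati_comparison_cot_general hK hf hineq ⟨hρ.1, hρ.2.trans_le (min_le_left _ _)⟩).2
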